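/- Let u, u′ ∈ ℂ^{2n} and let A, A′ ∈ M_{2n}(ℂ) satisfy J⁻¹ Aᵀ J = A and J⁻¹ A′ᵀ J = A′. Suppose there exists g ∈ GL_{2n}(ℂ) such that g u = u′, θ(g) u = u′, and g A g⁻¹ = A′ (that is, g maps (u, uᵀ) + A to (u′, u′ᵀ) + A′ under the enhanced action). Then there exists h ∈ Sp_{2n}(ℂ) such that h u = u′ and h A h⁻¹ = A′. In other words, every GL_{2n}(ℂ)-orbit in L̃ meets the subspace {(u, uᵀ) + A : u ∈ ℂ^{2n}, J⁻¹AᵀJ = A} (the enhanced θ-representation, isomorphic to V ⊕ Λ²V) in at most one Sp_{2n}(ℂ)-orbit. -/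

import Mathlib

open Matrix

/-- The standard symplectic form matrix `J = [[0, 1ₙ], [−1ₙ, 0]]` on `ℂ^{2n}`,
with `ℂ^{2n}` indexed by `Fin n ⊕ Fin n`. -/
noncomputable def J (n : ℕ) : Matrix (Fin n ⊕ Fin n) (Fin n ⊕ Fin n) ℂ :=
  Matrix.fromBlocks 0 1 (-1) 0

/-- The involutive anti-automorphism `σ(g) = J⁻¹ gᵀ J`. -/
noncomputable def sigmaG (n : ℕ) (g : Matrix (Fin n ⊕ Fin n) (Fin n ⊕ Fin n) ℂ) :
    Matrix (Fin n ⊕ Fin n) (Fin n ⊕ Fin n) ℂ :=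
  (J n)⁻¹ * gᵀ * J n

/-- The involutive automorphism `θ(g) = σ(g)⁻¹`. -/
noncomputable def thetaG (n : ℕ) (g : Matrix (Fin n ⊕ Fin n) (Fin n ⊕ Fin n) ℂ) :
    Matrix (Fin n ⊕ Fin n) (Fin n ⊕ Fin n) ℂ :=
  (sigmaG n g)⁻¹

open Polynomial in
theorem exists_poly_sqrt (m : ℂ[X]) (hm : m.Monic) (h0 : m.eval 0 ≠ 0) :
    ∃ q : ℂ[X], m ∣ q ^ 2 - X := by
  classical
  choose sq hsq using fun a : ℂ => IsAlgClosed.exists_pow_nat_eq a (n := 2) (by norm_num)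
  let q := Lagrange.interpolate m.roots.toFinset id sq
  have hq : ∀ a ∈ m.roots, q.eval a = sq a := fun a ha =>
    Lagrange.eval_interpolate_at_node (v := id) sq (fun _ _ _ _ h => h) (Multiset.mem_toFinset.2 ha)
  have hd : m ∣ (q ^ 2 - X) ^ (Multiset.card m.roots) := by
    have e : m = (m.roots.map fun a => X - C a).prod :=
      (IsAlgClosed.splits m).eq_prod_roots_of_monic hm
    have : (m.roots.map fun a => X - C a).prod ∣ (m.roots.map fun _ => q ^ 2 - X).prod := by
      apply Multiset.prod_dvd_prod_of_dvd
      intro a ha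
      rw [dvd_iff_isRoot]
      simp [hq a ha, hsq]
    rw [← e] at this
    simpa using this
  let S := AdjoinRoot m
  let x : S := AdjoinRoot.root m
  let y : S := AdjoinRoot.mk m q
  have hnil : IsNilpotent (y ^ 2 - x) := by
    refine ⟨Multiset.card m.roots, ?_⟩
    have := AdjoinRoot.mk_eq_zero.2 hd
    simpa [x, y] using this
  have hx : IsUnit x := by
    have hdv : (X : ℂ[X]) ∣ m - C (m.eval 0) := by
      simpa using X_sub_C_dvd_sub_C_eval (p := m) (a := 0)
    obtain ⟨r, hr⟩ := hdv
    have h := congrArg (AdjoinRoot.mk m) hr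
    rw [map_sub, map_mul, AdjoinRoot.mk_self, AdjoinRoot.mk_X, zero_sub] at h
    apply isUnit_of_mul_isUnit_left (y := AdjoinRoot.mk m r)
    change IsUnit (AdjoinRoot.root m * _)
    rw [← h]
    exact (((isUnit_iff_ne_zero.2 h0).map C).map (AdjoinRoot.mk m)).neg
  have hy : IsUnit y := by
    have : IsUnit (y ^ 2) := by
      have := hnil.isUnit_add_left_of_commute hx (Commute.all _ _)
      simpa using this
    exact (isUnit_pow_iff (by norm_num)).1 this
  have h2 : IsUnit (2 : S) := by
    have := (isUnit_iff_ne_zero.2 (two_ne_zero : (2 : ℂ) ≠ 0)).map (algebraMap ℂ S)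
    rwa [map_ofNat] at this
  obtain ⟨z, ⟨-, hz⟩, -⟩ := Polynomial.existsUnique_nilpotent_sub_and_aeval_eq_zero
    (P := (X ^ 2 - C x : S[X])) (x := y) (by simpa using hnil)
    (by simpa [one_add_one_eq_two] using h2.mul hy)
  obtain ⟨p, rfl⟩ := AdjoinRoot.mk_surjective z
  refine ⟨p, AdjoinRoot.mk_eq_zero.1 ?_⟩
  simpa [x] using hz

section
variable {ι : Type*} [Fintype ι] [DecidableEq ι]

theorem aeval_intertwine (M N T : Matrix ι ι ℂ) (h : M * T = T * N) (p : Polynomial ℂ) :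
    Polynomial.aeval M p * T = T * Polynomial.aeval N p := by
  have hk : ∀ k : ℕ, M ^ k * T = T * N ^ k := by
    intro k
    induction k with
    | zero => simp
    | succ k ih => rw [pow_succ', mul_assoc, ih, ← mul_assoc, h, mul_assoc, ← pow_succ']
  induction p using Polynomial.induction_on' with
  | add p q hp hq => simp [add_mul, mul_add, hp, hq]
  | monomial k a =>
    simp [Polynomial.aeval_monomial, Algebra.algebraMap_eq_smul_one, hk]

theorem aeval_transp (M : Matrix ι ι ℂ) (p : Polynomial ℂ) :
    (Polynomial.aeval M p)ᵀ = Polynomial.aeval Mᵀ p := by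
  induction p using Polynomial.induction_on' with
  | add p q hp hq => simp [hp, hq]
  | monomial k a =>
    simp [Polynomial.aeval_monomial, Algebra.algebraMap_eq_smul_one]

theorem aeval_fix (M : Matrix ι ι ℂ) (u : ι → ℂ) (h : M *ᵥ u = u) (p : Polynomial ℂ) :
    Polynomial.aeval M p *ᵥ u = p.eval 1 • u := by
  have hk : ∀ k : ℕ, M ^ k *ᵥ u = u := by
    intro k
    induction k with
    | zero => simp
    | succ k ih => rw [pow_succ, ← Matrix.mulVec_mulVec, h, ih]
  induction p using Polynomial.induction_on' with
  | add p q hp hq => simp [Matrix.add_mulVec, add_smul, hp, hq]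
  | monomial k a =>
    simp [Polynomial.aeval_monomial, Algebra.algebraMap_eq_smul_one, Matrix.smul_mulVec, hk]

theorem exists_good_sqrt (x : Matrix ι ι ℂ) (hx : IsUnit x) (u : ι → ℂ) (hu : x *ᵥ u = u) :
    ∃ p : Polynomial ℂ, Polynomial.aeval x p * Polynomial.aeval x p = x ∧
      Polynomial.aeval x p *ᵥ u = u := by
  have h0 : x.charpoly.eval 0 ≠ 0 := by
    rw [Matrix.eval_charpoly]
    have : IsUnit (-x).det := (Matrix.isUnit_iff_isUnit_det _).1 hx.neg
    simpa using this.ne_zero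
  obtain ⟨q, r, hr⟩ := exists_poly_sqrt x.charpoly x.charpoly_monic h0
  have hs : Polynomial.aeval x q * Polynomial.aeval x q = x := by
    have := congrArg (Polynomial.aeval x) hr
    rw [map_mul, Matrix.aeval_self_charpoly, zero_mul, map_sub, map_pow, Polynomial.aeval_X,
      sub_eq_zero, sq] at this
    exact this
  by_cases hu0 : u = 0
  · exact ⟨q, hs, by simp [hu0]⟩
  have hf := aeval_fix x u hu q
  have h1 : (q.eval 1 * q.eval 1) • u = (1 : ℂ) • u := by
    rw [one_smul]
    conv_rhs => rw [← hu, ← hs, ← Matrix.mulVec_mulVec, hf, Matrix.mulVec_smul, hf, smul_smul]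
  have h2 := smul_left_injective ℂ hu0 h1
  rcases mul_self_eq_one_iff.1 h2 with h | h
  · exact ⟨q, hs, by rw [hf, h, one_smul]⟩
  · exact ⟨-q, by simpa using hs, by simp [Matrix.neg_mulVec, hf, h]⟩

end

theorem J_sq (n : ℕ) : J n * J n = -1 := by
  simp [_root_.J, Matrix.fromBlocks_multiply, ← Matrix.fromBlocks_one, Matrix.fromBlocks_neg]

theorem J_transp (n : ℕ) : (J n)ᵀ = - J n := by
  simp [_root_.J, Matrix.fromBlocks_transpose, Matrix.fromBlocks_neg]

/-- Every `GL_{2n}(ℂ)`-orbit in the enhanced Lie algebra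
`L̃ = ℂ^{2n} ⊕ (ℂ^{2n})* ⊕ gl_{2n}(ℂ)` meets the enhanced θ-representation
`{(u, uᵀ) + A : J⁻¹ Aᵀ J = A}` (isomorphic to `V ⊕ Λ²V`) in at most one
`Sp_{2n}(ℂ)`-orbit: if `g ∈ GL_{2n}(ℂ)` sends `(u, uᵀ) + A` to `(u′, u′ᵀ) + A′`
(i.e. `g u = u′`, `θ(g) u = u′` and `g A g⁻¹ = A′`), then some `h ∈ Sp_{2n}(ℂ)`
satisfies `h u = u′` and `h A h⁻¹ = A′`. -/
theorem enhanced_theta_rep_orbit_embedding_Sp (n : ℕ) (hn : 1 ≤ n)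
    (u u' : (Fin n ⊕ Fin n) → ℂ)
    (A A' : Matrix (Fin n ⊕ Fin n) (Fin n ⊕ Fin n) ℂ)
    (hA : (J n)⁻¹ * Aᵀ * J n = A) (hA' : (J n)⁻¹ * A'ᵀ * J n = A')
    (g : Matrix (Fin n ⊕ Fin n) (Fin n ⊕ Fin n) ℂ) (hg : IsUnit g)
    (h1 : g *ᵥ u = u') (h2 : thetaG n g *ᵥ u = u')
    (h3 : g * A * g⁻¹ = A') :
    ∃ h : Matrix (Fin n ⊕ Fin n) (Fin n ⊕ Fin n) ℂ,
      hᵀ * J n * h = J n ∧ h *ᵥ u = u' ∧ h * A * h⁻¹ = A' := by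
  have hJu : IsUnit (J n).det := by
    apply (Matrix.isUnit_iff_isUnit_det _).1
    exact IsUnit.of_mul_eq_one (-(J n)) (by rw [mul_neg, J_sq, neg_neg])
  have key : ∀ M N : Matrix (Fin n ⊕ Fin n) (Fin n ⊕ Fin n) ℂ,
      (J n)⁻¹ * M * J n = N → M * J n = J n * N := by
    rintro M N rfl
    rw [mul_assoc, Matrix.mul_nonsing_inv_cancel_left _ _ hJu]
  have hgd : IsUnit g.det := (Matrix.isUnit_iff_isUnit_det _).1 hg
  have kA := key _ _ hA
  have kA' := key _ _ hA'
  obtain ⟨t, ht⟩ : ∃ t, t = sigmaG n g := ⟨_, rfl⟩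
  have kg : gᵀ * J n = J n * t := key _ _ ht.symm
  have htd : IsUnit t.det := by
    rw [ht, sigmaG, Matrix.det_mul, Matrix.det_mul, Matrix.det_transpose]
    exact (((Matrix.isUnit_nonsing_inv_det _ hJu)).mul hgd).mul hJu
  have kt : tᵀ * J n = J n * g := by
    have h := congrArg Matrix.transpose kg
    rw [Matrix.transpose_mul, Matrix.transpose_mul, Matrix.transpose_transpose, J_transp] at h
    simpa using h.symm
  have Jc : ∀ M N : Matrix (Fin n ⊕ Fin n) (Fin n ⊕ Fin n) ℂ, J n * M = J n * N → M = N := by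
    intro M N h
    rw [← Matrix.nonsing_inv_mul_cancel_left _ M hJu, h,
      Matrix.nonsing_inv_mul_cancel_left _ _ hJu]
  have hgA : g * A = A' * g := by
    rw [← h3, Matrix.nonsing_inv_mul_cancel_right _ _ hgd]
  have htA : A * t = t * A' := by
    apply Jc
    have h := congrArg Matrix.transpose hgA
    rw [Matrix.transpose_mul, Matrix.transpose_mul] at h
    rw [← mul_assoc, ← kA, mul_assoc, ← kg, ← mul_assoc, h, mul_assoc, kA', ← mul_assoc, kg,
      mul_assoc]
  have hu' : t *ᵥ u' = u := by
    rw [← h2, thetaG, ← ht, Matrix.mulVec_mulVec, Matrix.mul_nonsing_inv _ htd, Matrix.one_mulVec]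
  have hxu : (t * g) *ᵥ u = u := by rw [← Matrix.mulVec_mulVec, h1, hu']
  have hxd : IsUnit (t * g) := (Matrix.isUnit_iff_isUnit_det _).2 (by
    rw [Matrix.det_mul]; exact htd.mul hgd)
  obtain ⟨p, hs, hsu⟩ := exists_good_sqrt (t * g) hxd u hxu
  have hsA := aeval_intertwine (t * g) (t * g) A
    (by rw [mul_assoc, hgA, ← mul_assoc, ← htA, mul_assoc]) p
  have hsJ := aeval_intertwine (t * g)ᵀ (t * g) (J n)
    (by rw [Matrix.transpose_mul, mul_assoc, kt, ← mul_assoc, kg, mul_assoc]) p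
  rw [← aeval_transp] at hsJ
  generalize Polynomial.aeval (t * g) p = s at *
  have hsd : IsUnit s.det := by
    have := (Matrix.isUnit_iff_isUnit_det _).1 hxd
    rw [← hs, Matrix.det_mul] at this
    exact isUnit_of_mul_isUnit_left this
  have hstd : IsUnit sᵀ.det := by rwa [Matrix.det_transpose]
  refine ⟨g * s⁻¹, ?_, ?_, ?_⟩
  · have e : gᵀ * J n * g = sᵀ * J n * s := by
      rw [kg, hsJ, mul_assoc, mul_assoc, hs]
    calc (g * s⁻¹)ᵀ * J n * (g * s⁻¹) = (s⁻¹)ᵀ * (gᵀ * J n * g) * s⁻¹ := by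
          rw [Matrix.transpose_mul]; simp only [mul_assoc]
      _ = (sᵀ)⁻¹ * (sᵀ * (J n * s)) * s⁻¹ := by
          rw [e, Matrix.transpose_nonsing_inv, mul_assoc sᵀ]
      _ = J n := by
          rw [Matrix.nonsing_inv_mul_cancel_left _ _ hstd,
            Matrix.mul_nonsing_inv_cancel_right _ _ hsd]
  · have : s⁻¹ *ᵥ u = u := by
      conv_lhs => rw [← hsu]
      rw [Matrix.mulVec_mulVec, Matrix.nonsing_inv_mul _ hsd, Matrix.one_mulVec]
    rw [← Matrix.mulVec_mulVec, this, h1]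
  · have : s⁻¹ * A * s = A := by
      rw [mul_assoc, ← hsA, Matrix.nonsing_inv_mul_cancel_left _ _ hsd]
    rw [Matrix.mul_inv_rev, Matrix.nonsing_inv_nonsing_inv _ hsd]
    calc g * s⁻¹ * A * (s * g⁻¹) = g * (s⁻¹ * A * s) * g⁻¹ := by simp only [mul_assoc]
      _ = A' := by rw [this, h3]
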